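/- arXiv:1311.1442 — 6 statements merged into one kernel-verified Lean document; each statement's English description precedes it below -/
import Mathlib

section
/- Let p be a prime number, let L ≥ 1, and let p_1, …, p_L be pairwise distinct prime natural numbers with ∏_{i=1}^L p_i < p. Let v be a natural number coprime to p − 1. Then the map from {0,1}^L to Z/pZ sending a bit-vector m = (m_1,…,m_L) to ∏_{i=1}^L (p_i mod p)^{v·m_i} is injective. -/
/-!
The image of `m` is the `v`-th power of the residue of the natural number `∏ i, pr i ^ m i`.
This number is positive and at most `∏ i, pr i < p`, so its residue is a unit modulo `p` and
determines it. Since `v` is coprime to the order `p - 1` of the unit group, taking `v`-th powers is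
injective on units. Finally `m j = 1` exactly when `pr j` divides `∏ i, pr i ^ m i`, so unique
factorization recovers `m` (`dvd_subsetProd_iff`).
-/

theorem dvd_subsetProd_iff {L : ℕ} (pr : Fin L → ℕ) (hprime : ∀ i, (pr i).Prime)
    (hdist : Function.Injective pr) (m : Fin L → Fin 2) (j : Fin L) :
    pr j ∣ ∏ i, pr i ^ (m i : ℕ) ↔ m j = 1 := by
  constructor
  · intro h
    obtain ⟨i, -, hi⟩ := (Prime.dvd_finsetProd_iff (hprime j).prime _).1 h
    have hij : j = i :=
      hdist ((Nat.prime_dvd_prime_iff_eq (hprime j) (hprime i)).1 ((hprime j).dvd_of_dvd_pow hi))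
    subst hij
    by_contra hne
    have h0 : m j = 0 := by omega
    rw [h0] at hi
    exact (hprime j).one_lt.ne' (Nat.dvd_one.1 (by simpa using hi))
  · intro h
    refine dvd_trans ?_ (Finset.dvd_prod_of_mem _ (Finset.mem_univ j))
    simp [h]

theorem subsetProd_le {L : ℕ} (pr : Fin L → ℕ) (hprime : ∀ i, (pr i).Prime)
    (m : Fin L → Fin 2) : ∏ i, pr i ^ (m i : ℕ) ≤ ∏ i, pr i := by
  refine Finset.prod_le_prod' fun i _ => ?_
  calc pr i ^ (m i : ℕ) ≤ pr i ^ 1 := Nat.pow_le_pow_right (hprime i).pos (by omega)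
    _ = pr i := pow_one _

theorem ZMod.pow_left_injective_of_coprime {p : ℕ} [Fact p.Prime] {v : ℕ}
    (hv : Nat.Coprime v (p - 1)) {a b : ZMod p} (ha : a ≠ 0) (hb : b ≠ 0)
    (h : a ^ v = b ^ v) : a = b := by
  have hcard : (Nat.card (ZMod p)ˣ).Coprime v := by
    rw [Nat.card_eq_fintype_card, ZMod.card_units]
    exact hv.symm
  have hu : Units.mk0 a ha = Units.mk0 b hb :=
    (powCoprime hcard).injective (Units.ext (by simpa using h))
  simpa using congrArg Units.val hu

/-- Injectivity of the Naccache–Stern encryption map. -/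
theorem stmt_1 (p : ℕ) (hp : p.Prime) (L : ℕ) (hL : 1 ≤ L)
    (pr : Fin L → ℕ) (hprime : ∀ i, (pr i).Prime)
    (hdist : Function.Injective pr)
    (hlt : ∏ i, pr i < p)
    (v : ℕ) (hv : Nat.Coprime v (p - 1)) :
    Function.Injective
      (fun m : Fin L → Fin 2 => ∏ i, ((pr i : ZMod p)) ^ (v * (m i : ℕ))) := by
  have : Fact p.Prime := ⟨hp⟩
  have hpow (m : Fin L → Fin 2) : ∏ i, ((pr i : ZMod p)) ^ (v * (m i : ℕ)) =
      ((∏ i, pr i ^ (m i : ℕ) : ℕ) : ZMod p) ^ v := by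
    push_cast
    rw [← Finset.prod_pow]
    exact Finset.prod_congr rfl fun i _ => by rw [← pow_mul, mul_comm]
  have hltp (m : Fin L → Fin 2) : ∏ i, pr i ^ (m i : ℕ) < p :=
    (subsetProd_le pr hprime m).trans_lt hlt
  have hne (m : Fin L → Fin 2) : ((∏ i, pr i ^ (m i : ℕ) : ℕ) : ZMod p) ≠ 0 := by
    rw [Ne, ZMod.natCast_eq_zero_iff]
    exact Nat.not_dvd_of_pos_of_lt
      (Finset.prod_pos fun i _ => pow_pos (hprime i).pos _) (hltp m)
  intro m m' h
  simp only [hpow] at h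
  have hcast := ZMod.pow_left_injective_of_coprime hv (hne m) (hne m') h
  have hnat : ∏ i, pr i ^ (m i : ℕ) = ∏ i, pr i ^ (m' i : ℕ) :=
    Nat.ModEq.eq_of_lt_of_lt ((ZMod.natCast_eq_natCast_iff _ _ _).1 hcast) (hltp m) (hltp m')
  funext j
  have hj : m j = 1 ↔ m' j = 1 := by
    rw [← dvd_subsetProd_iff pr hprime hdist m j, hnat, dvd_subsetProd_iff pr hprime hdist m' j]
  omega
end

section
/- Let p be a prime number, let L ≥ 1, and let p_1, …, p_L be pairwise distinct prime natural numbers with ∏_{i=1}^L p_i < p. Let u, v be natural numbers with u·v ≡ 1 (mod p − 1). Then for every bit-vector m = (m_1,…,m_L) ∈ {0,1}^L, the canonical representative in {0,…,p−1} of the element (∏_{i=1}^L (p_i mod p)^{v·m_i})^u of Z/pZ equals the natural number ∏_{i=1}^L p_i^{m_i}. (This is the correctness of decryption in the Naccache–Stern knapsack protocol.) -/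
/-!
With `M = ∏ i, pr i ^ m i`, the decrypted element is `M ^ (u * v)` in `ZMod p`. Since
`1 ≤ M ≤ ∏ i, pr i < p`, the residue of `M` is nonzero, so Fermat's little theorem and
`u * v ≡ 1 [MOD p - 1]` give `M ^ (u * v) = M`; and `M < p` makes `M` its own representative.
-/

/-- Correctness of decryption in the Naccache–Stern knapsack protocol. -/
theorem stmt_2 (p : ℕ) (hp : p.Prime) (L : ℕ) (hL : 1 ≤ L)
    (pr : Fin L → ℕ) (hprime : ∀ i, (pr i).Prime)
    (hdist : Function.Injective pr)
    (hlt : ∏ i, pr i < p)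
    (u v : ℕ) (huv : u * v ≡ 1 [MOD p - 1]) :
    ∀ m : Fin L → Fin 2,
      ((∏ i, ((pr i : ZMod p)) ^ (v * (m i : ℕ))) ^ u).val
        = ∏ i, pr i ^ (m i : ℕ) := by
  intro m
  have : Fact p.Prime := ⟨hp⟩
  -- The plaintext product lies in `{1, …, p - 1}`, so it is recovered from its residue mod `p`.
  have hM_lt : ∏ i, pr i ^ (m i : ℕ) < p := by
    refine lt_of_le_of_lt (Finset.prod_le_prod' fun i _ => ?_) hlt
    calc pr i ^ (m i : ℕ) ≤ pr i ^ 1 :=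
          Nat.pow_le_pow_right (hprime i).pos (by have := (m i).isLt; omega)
      _ = pr i := pow_one _
  have hM_pos : 0 < ∏ i, pr i ^ (m i : ℕ) :=
    Finset.prod_pos fun i _ => pow_pos (hprime i).pos _
  have hM_ne : ((∏ i, pr i ^ (m i : ℕ) : ℕ) : ZMod p) ≠ 0 := by
    rw [Ne, ZMod.natCast_eq_zero_iff]
    exact Nat.not_dvd_of_pos_of_lt hM_pos hM_lt
  have hcipher : (∏ i, ((pr i : ZMod p)) ^ (v * (m i : ℕ))) ^ u
      = ((∏ i, pr i ^ (m i : ℕ) : ℕ) : ZMod p) ^ (u * v) := by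
    push_cast
    rw [mul_comm u v, pow_mul, ← Finset.prod_pow _ v]
    congr 1
    exact Finset.prod_congr rfl fun i _ => by rw [← pow_mul, mul_comm]
  -- Fermat's little theorem: exponents of a nonzero residue only matter modulo `p - 1`.
  have hfermat := pow_eq_pow_of_modEq huv (ZMod.pow_card_sub_one_eq_one hM_ne)
  rw [hcipher, hfermat, pow_one, ZMod.val_natCast_of_lt hM_lt]
end

section
/- Let F be a finite field, let h ∈ F[x] be a monic irreducible polynomial of degree d, let L ≥ 1, and let p_1, …, p_L ∈ F[x] be pairwise distinct monic irreducible polynomials with ∑_{i=1}^L deg p_i < d. Let v be a natural number coprime to |F|^d − 1. Then the map from {0,1}^L to F[x] sending a bit-vector m = (m_1,…,m_L) to the remainder of ∏_{i=1}^L p_i^{v·m_i} upon division by h is injective. -/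
open Polynomial

/-!
Write `A m = ∏ i, p i ^ m i`, so that the map sends `m` to `A m ^ v` modulo `h`. Since
`deg (A m) < deg h`, the class of `A m` in the field `K = F[X]/(h)` is nonzero. The group `Kˣ` has
order `|F| ^ d - 1`, which is coprime to `v`, so taking `v`-th powers is injective on it and
`A m ^ v` determines `A m` modulo `h`. By the degree bound again it determines `A m` itself, and
`m i = 1` holds exactly when `p i ∣ A m`, by unique factorization.
-/

/-- The order of the unit group of `F[X]/(h)`. -/
lemma card_units_adjoinRoot {F : Type*} [Field F] [Fintype F] (h : F[X]) [Fact (Irreducible h)] :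
    Nat.card (AdjoinRoot h)ˣ = Fintype.card F ^ h.natDegree - 1 := by
  have h0 : h ≠ 0 := (Fact.out : Irreducible h).ne_zero
  have := (AdjoinRoot.powerBasis h0).finite
  have := Module.finite_of_finite F (M := AdjoinRoot h)
  rw [Nat.card_units, Module.natCard_eq_pow_finrank (K := F), (AdjoinRoot.powerBasis h0).finrank,
    AdjoinRoot.powerBasis_dim, Nat.card_eq_fintype_card]

lemma natDegree_prod_bits_le {F : Type*} [Field F] {L : ℕ} (p : Fin L → F[X])
    (m : Fin L → Fin 2) :
    (∏ i, p i ^ (m i : ℕ)).natDegree ≤ ∑ i, (p i).natDegree := by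
  refine (natDegree_prod_le _ _).trans (Finset.sum_le_sum fun i _ => ?_)
  refine natDegree_pow_le.trans ?_
  have : (m i : ℕ) ≤ 1 := by omega
  nlinarith

/-- The bits of `m` are read off from the irreducible factors of the product. -/
lemma dvd_prod_bits_iff {F : Type*} [Field F] {L : ℕ} (p : Fin L → F[X])
    (hpmonic : ∀ i, (p i).Monic) (hpirr : ∀ i, Irreducible (p i)) (hdist : Function.Injective p)
    (m : Fin L → Fin 2) (i : Fin L) :
    p i ∣ ∏ j, p j ^ (m j : ℕ) ↔ m i = 1 := by
  constructor
  · intro hd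
    obtain ⟨j, -, hj⟩ := (hpirr i).prime.exists_mem_finset_dvd hd
    have hij : p i = p j := eq_of_monic_of_associated (hpmonic i) (hpmonic j)
      ((hpirr i).associated_of_dvd (hpirr j) ((hpirr i).prime.dvd_of_dvd_pow hj))
    obtain rfl := hdist hij
    by_contra hne
    have h0 : (m i : ℕ) = 0 := by omega
    rw [h0, pow_zero] at hj
    exact (hpirr i).not_isUnit (isUnit_of_dvd_one hj)
  · intro hm
    refine dvd_trans ?_ (Finset.dvd_prod_of_mem _ (Finset.mem_univ i))
    simp [hm]

/-- Injectivity of the encryption map of the polynomial knapsack protocol. -/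
theorem stmt_3 (F : Type*) [Field F] [Fintype F]
    (h : F[X]) (hmonic : h.Monic) (hirr : Irreducible h)
    (d : ℕ) (hdeg : h.natDegree = d)
    (L : ℕ) (hL : 1 ≤ L)
    (p : Fin L → F[X]) (hpmonic : ∀ i, (p i).Monic)
    (hpirr : ∀ i, Irreducible (p i)) (hdist : Function.Injective p)
    (hsum : ∑ i, (p i).natDegree < d)
    (v : ℕ) (hv : Nat.Coprime v (Fintype.card F ^ d - 1)) :
    Function.Injective
      (fun m : Fin L → Fin 2 => (∏ i, p i ^ (v * (m i : ℕ))) %ₘ h) := by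
  intro m n hmn
  subst hdeg
  have : Fact (Irreducible h) := ⟨hirr⟩
  set A : (Fin L → Fin 2) → F[X] := fun m => ∏ i, p i ^ (m i : ℕ) with hA
  have hlt : ∀ m, (A m).natDegree < h.natDegree := fun m =>
    (natDegree_prod_bits_le p m).trans_lt hsum
  have hne : ∀ m, AdjoinRoot.mk h (A m) ≠ 0 := fun m h0 =>
    (hlt m).not_ge (natDegree_le_of_dvd (AdjoinRoot.mk_eq_zero.mp h0)
      (monic_prod_of_monic _ _ fun i _ => (hpmonic i).pow _).ne_zero)
  have hpow : ∀ m : Fin L → Fin 2, ∏ i, p i ^ (v * (m i : ℕ)) = A m ^ v := fun m => by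
    simp only [hA, ← Finset.prod_pow, ← pow_mul, mul_comm v]
  have hK : AdjoinRoot.mk h (A m) ^ v = AdjoinRoot.mk h (A n) ^ v := by
    simp only [hpow] at hmn
    rw [← map_pow, ← map_pow, AdjoinRoot.mk_eq_mk, ← modByMonic_eq_zero_iff_dvd hmonic,
      sub_modByMonic, hmn, sub_self]
  have hmk : AdjoinRoot.mk h (A m) = AdjoinRoot.mk h (A n) := by
    have hc : (Nat.card (AdjoinRoot h)ˣ).Coprime v := by
      rw [card_units_adjoinRoot]; exact hv.symm
    have hu : Units.mk0 _ (hne m) = Units.mk0 _ (hne n) :=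
      (powCoprime hc).injective (Units.ext (by simpa using hK))
    simpa using congrArg Units.val hu
  have hAeq : A m = A n := by
    by_contra hAne
    have hle := natDegree_le_of_dvd (AdjoinRoot.mk_eq_mk.mp hmk) (sub_ne_zero.mpr hAne)
    exact (hle.trans (natDegree_sub_le _ _)).not_gt (max_lt (hlt m) (hlt n))
  funext i
  have hm := dvd_prod_bits_iff p hpmonic hpirr hdist m i
  have hn := dvd_prod_bits_iff p hpmonic hpirr hdist n i
  have hiff : m i = 1 ↔ n i = 1 := by
    rw [← hm, ← hn]
    exact iff_of_eq (congrArg (p i ∣ ·) hAeq)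
  omega
end

section
/- Let F be a finite field, let h ∈ F[x] be a monic irreducible polynomial of degree d, let L ≥ 1, and let p_1, …, p_L ∈ F[x] be pairwise distinct monic irreducible polynomials with ∑_{i=1}^L deg p_i < d. Let u, v be natural numbers with u·v ≡ 1 (mod |F|^d − 1). Then for every bit-vector m = (m_1,…,m_L) ∈ {0,1}^L, the remainder upon division by h of the u-th power of the remainder of ∏_{i=1}^L p_i^{v·m_i} upon division by h equals ∏_{i=1}^L p_i^{m_i}; in symbols, ((∏_i p_i^{v·m_i} mod h)^u) mod h = ∏_i p_i^{m_i}. (This is the correctness of decryption in the polynomial knapsack protocol.) -/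
open Polynomial

/-!
Write `P = ∏ i, p i ^ m i`. The plaintext `P` is monic of degree at most `∑ i, deg (p i) < d`, so it
is its own remainder modulo `h` and its class in the field `F[X] / (h)` is nonzero. This field has
`|F| ^ d` elements, so the class `a` of `P` satisfies `a ^ (|F| ^ d - 1) = 1`, whence
`(a ^ v) ^ u = a`. Thus `h` divides the difference of the decrypted power and `P`, and the two have
the same remainder, which is `P`.
-/

/-- An exponent congruent to `1` modulo `|F| ^ deg h - 1` fixes every nonzero class of
`F[X] / (h)`, because the multiplicative group of this field has order `|F| ^ deg h - 1`. -/
theorem adjoinRoot_pow_eq_self {F : Type*} [Field F] [Fintype F] {h : F[X]}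
    (hirr : Irreducible h) {n : ℕ}
    (hn : n ≡ 1 [MOD Fintype.card F ^ h.natDegree - 1])
    {a : AdjoinRoot h} (ha : a ≠ 0) : a ^ n = a := by
  have : Fact (Irreducible h) := ⟨hirr⟩
  let pb := AdjoinRoot.powerBasis hirr.ne_zero
  have : Module.Finite F (AdjoinRoot h) := pb.finite
  have : Finite (AdjoinRoot h) := Module.finite_of_finite F
  have : Fintype (AdjoinRoot h) := Fintype.ofFinite _
  have hcard : Fintype.card (AdjoinRoot h) = Fintype.card F ^ h.natDegree := by
    rw [Module.card_eq_pow_finrank (K := F), pb.finrank, AdjoinRoot.powerBasis_dim]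
  have hord : orderOf a ∣ Fintype.card F ^ h.natDegree - 1 := by
    rw [← hcard]
    exact orderOf_dvd_of_pow_eq_one (FiniteField.pow_card_sub_one_eq_one a ha)
  have hpow : a ^ n = a ^ 1 := by
    rw [← pow_mod_orderOf a n, ← pow_mod_orderOf a 1, hn.of_dvd hord]
  rw [hpow, pow_one]

/-- Correctness of decryption in the polynomial knapsack protocol. -/
theorem stmt_4 (F : Type*) [Field F] [Fintype F]
    (h : F[X]) (hmonic : h.Monic) (hirr : Irreducible h)
    (d : ℕ) (hdeg : h.natDegree = d)
    (L : ℕ) (hL : 1 ≤ L)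
    (p : Fin L → F[X]) (hpmonic : ∀ i, (p i).Monic)
    (hpirr : ∀ i, Irreducible (p i)) (hdist : Function.Injective p)
    (hsum : ∑ i, (p i).natDegree < d)
    (u v : ℕ) (huv : u * v ≡ 1 [MOD Fintype.card F ^ d - 1]) :
    ∀ m : Fin L → Fin 2,
      (((∏ i, p i ^ (v * (m i : ℕ))) %ₘ h) ^ u) %ₘ h
        = ∏ i, p i ^ (m i : ℕ) := by
  intro m
  subst hdeg
  set P : F[X] := ∏ i, p i ^ (m i : ℕ) with hP
  have hPmonic : P.Monic := monic_prod_of_monic _ _ fun i _ => (hpmonic i).pow _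
  have hPdeg : P.natDegree < h.natDegree := by
    refine lt_of_le_of_lt ?_ hsum
    rw [hP, natDegree_prod_of_monic _ _ fun i _ => (hpmonic i).pow _]
    refine Finset.sum_le_sum fun i _ => ?_
    rw [(hpmonic i).natDegree_pow]
    exact mul_le_of_le_one_left (Nat.zero_le _) (by omega)
  have hPlt : P.degree < h.degree := degree_lt_degree hPdeg
  have hPv : ∏ i, p i ^ (v * (m i : ℕ)) = P ^ v := by
    rw [hP, ← Finset.prod_pow]
    exact Finset.prod_congr rfl fun i _ => by rw [mul_comm, pow_mul]
  have hPne : AdjoinRoot.mk h P ≠ 0 :=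
    AdjoinRoot.mk_ne_zero_of_natDegree_lt hmonic hPmonic.ne_zero hPdeg
  have hmod : AdjoinRoot.mk h (P ^ v %ₘ h) = AdjoinRoot.mk h (P ^ v) := by
    rw [AdjoinRoot.mk_eq_mk]
    exact dvd_modByMonic_sub _ _
  have hclass : AdjoinRoot.mk h ((P ^ v %ₘ h) ^ u) = AdjoinRoot.mk h P := by
    rw [map_pow, hmod, map_pow, ← pow_mul, mul_comm]
    exact adjoinRoot_pow_eq_self hirr huv hPne
  rw [AdjoinRoot.mk_eq_mk] at hclass
  rw [hPv, modByMonic_eq_of_dvd_sub hmonic hclass, (modByMonic_eq_self_iff hmonic).2 hPlt]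
end

section
/- Let F be a finite field with q elements and denote by D_n^q the number of monic irreducible polynomials of degree n in F[x]. Then D_n^q is asymptotically equivalent to q^n/n as n → ∞; that is, the real-valued sequence n · D_n^q / q^n tends to 1 as n tends to infinity. -/
/-!
Let `L` be the extension of `F` of degree `n`, so `|L| = q ^ n`. Sending an element of degree `n`
over `F` to its minimal polynomial is an `n`-to-one map onto the monic irreducible polynomials of
degree `n`: every such polynomial divides `X ^ q ^ n - X`, so it splits in `L`, and it is separable
because `F` is perfect. Hence `n * D_n` is the number of elements of `L` of degree exactly `n`
(`card_degree_eq`). Any other element has degree `d` a proper divisor of `n`, so `d ≤ n / 2`, and is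
a root of `X ^ q ^ d - X`; there are at most `(n / 2) * q ^ (n / 2)` such elements
(`card_degree_ne_le`), which is negligible compared with `q ^ n`.
-/

open Polynomial Filter

section Counting

variable (F L : Type*) [Field F] [Field L] [Fintype L] [Algebra F L]

lemma minpoly_dvd_X_pow_sub_X {n : ℕ} (hL : Nat.card L = Nat.card F ^ n) (x : L) :
    minpoly F x ∣ X ^ Nat.card F ^ n - X := by
  apply minpoly.dvd
  have h := FiniteField.pow_card x
  rw [Fintype.card_eq_nat_card, hL] at h
  simp [h]

/-- The fibre of `minpoly F` over a monic irreducible `f` is its set of roots in `L`, and `f`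
splits into distinct linear factors there. -/
lemma card_minpoly_fiber [Finite F] [DecidableEq F[X]] {n : ℕ} (hn : n ≠ 0)
    (hL : Nat.card L = Nat.card F ^ n)
    {f : F[X]} (hm : f.Monic) (hi : Irreducible f) (hd : f.natDegree = n) :
    (Finset.univ.filter fun x : L => minpoly F x = f).card = n := by
  classical
  have hdvd : f ∣ X ^ Nat.card F ^ n - X :=
    hi.natDegree_dvd_iff_dvd_X_pow_card_pow_sub_X.1 hd.dvd
  have hsp : (f.map (algebraMap F L)).Splits := by
    have h := IsSplittingField.splits (K := F) (L := L) (X ^ Fintype.card L - X)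
    rw [Fintype.card_eq_nat_card, hL] at h
    have hne : (X ^ Nat.card F ^ n - X : F[X]) ≠ 0 :=
      FiniteField.X_pow_card_pow_sub_X_ne_zero _ hn Finite.one_lt_card
    exact h.of_dvd ((Polynomial.map_ne_zero_iff (algebraMap F L).injective).2 hne)
      (Polynomial.map_dvd _ hdvd)
  have hcard := card_rootSet_eq_natDegree (K := L)
    (PerfectField.separable_of_irreducible hi) hsp
  rw [hd, ← Set.toFinset_card] at hcard
  rw [← hcard]
  congr 1
  ext x
  simp only [Finset.mem_filter, Finset.mem_univ, true_and, Set.mem_toFinset,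
    mem_rootSet_of_ne hi.ne_zero]
  constructor
  · rintro rfl
    exact minpoly.aeval F x
  · intro hx
    exact (minpoly.eq_of_irreducible_of_monic hi hx hm).symm

lemma card_degree_eq [Finite F] {n : ℕ} (hn : n ≠ 0) (hL : Nat.card L = Nat.card F ^ n) :
    (Finset.univ.filter fun x : L => (minpoly F x).natDegree = n).card =
      n * Nat.card {f : F[X] // f.Monic ∧ Irreducible f ∧ f.natDegree = n} := by
  classical
  set G := Finset.univ.filter fun x : L => (minpoly F x).natDegree = n with hG
  have hint (x : L) : IsIntegral F x := Algebra.IsIntegral.isIntegral x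
  have hmem (f : F[X]) : f ∈ G.image (minpoly F) ↔
      f.Monic ∧ Irreducible f ∧ f.natDegree = n := by
    simp only [hG, Finset.mem_image, Finset.mem_filter, Finset.mem_univ, true_and]
    constructor
    · rintro ⟨x, hx, rfl⟩
      exact ⟨minpoly.monic (hint x), minpoly.irreducible (hint x), hx⟩
    · rintro ⟨hm, hi, hd⟩
      have h := card_minpoly_fiber F L hn hL hm hi hd
      obtain ⟨x, hx⟩ := Finset.card_pos.1 (h ▸ Nat.pos_of_ne_zero hn)
      have hx : minpoly F x = f := by simpa using hx
      exact ⟨x, hx ▸ hd, hx⟩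
  have hD : Nat.card {f : F[X] // f.Monic ∧ Irreducible f ∧ f.natDegree = n} =
      (G.image (minpoly F)).card := by
    rw [← Nat.card_eq_finsetCard]
    exact Nat.card_congr (Equiv.subtypeEquivRight fun f => (hmem f).symm)
  rw [hD, Finset.card_eq_sum_card_fiberwise (f := minpoly F) (t := G.image (minpoly F))
    (fun x hx => Finset.mem_image_of_mem _ hx), mul_comm, ← smul_eq_mul, ← Finset.sum_const]
  refine Finset.sum_congr rfl fun f hf => ?_
  obtain ⟨hm, hi, hd⟩ := (hmem f).1 hf
  rw [← card_minpoly_fiber F L hn hL hm hi hd]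
  congr 1
  ext x
  simp only [hG, Finset.mem_filter, Finset.mem_univ, true_and, and_iff_right_iff_imp]
  rintro rfl
  exact hd

lemma card_degree_ne_le [Finite F] {n : ℕ} (hn : n ≠ 0) (hL : Nat.card L = Nat.card F ^ n) :
    (Finset.univ.filter fun x : L => ¬ (minpoly F x).natDegree = n).card ≤
      n / 2 * Nat.card F ^ (n / 2) := by
  classical
  have hint (x : L) : IsIntegral F x := Algebra.IsIntegral.isIntegral x
  have hq : 1 < Nat.card F := Finite.one_lt_card
  let R (d : ℕ) : Finset L := (X ^ Nat.card F ^ d - X : L[X]).roots.toFinset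
  have hsub : (Finset.univ.filter fun x : L => ¬ (minpoly F x).natDegree = n) ⊆
      (Finset.Icc 1 (n / 2)).biUnion R := by
    intro x hx
    have hx : (minpoly F x).natDegree ≠ n := by simpa using hx
    have hi := minpoly.irreducible (hint x)
    have hpos := hi.natDegree_pos
    obtain ⟨c, hc⟩ := hi.natDegree_dvd_of_dvd_X_pow_card_pow_sub_X
      (minpoly_dvd_X_pow_sub_X F L hL x)
    -- the cofactor `c` of a proper divisor of `n` is at least `2`
    have hc2 : 2 ≤ c := by
      rcases c with _ | _ | c
      · simp at hc; omega
      · simp at hc; omega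
      · omega
    have hle : (minpoly F x).natDegree ≤ n / 2 := by
      rw [Nat.le_div_iff_mul_le two_pos]
      calc _ ≤ (minpoly F x).natDegree * c := Nat.mul_le_mul_left _ hc2
        _ = n := hc.symm
    refine Finset.mem_biUnion.2 ⟨_, Finset.mem_Icc.2 ⟨hpos, hle⟩, ?_⟩
    have h0 := aeval_eq_zero_of_dvd_aeval_eq_zero
      (hi.natDegree_dvd_iff_dvd_X_pow_card_pow_sub_X.1 dvd_rfl) (minpoly.aeval F x)
    simp only [R, Multiset.mem_toFinset]
    rw [mem_roots (FiniteField.X_pow_card_pow_sub_X_ne_zero _ hpos.ne' hq)]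
    simpa [IsRoot] using h0
  refine (Finset.card_le_card hsub).trans
    ((Finset.card_biUnion_le_card_mul _ _ (Nat.card F ^ (n / 2)) ?_).trans (by simp))
  intro d hd
  rw [Finset.mem_Icc] at hd
  calc (R d).card ≤ (X ^ Nat.card F ^ d - X : L[X]).natDegree :=
        (Multiset.toFinset_card_le _).trans (card_roots' _)
    _ = Nat.card F ^ d :=
        FiniteField.X_pow_card_pow_sub_X_natDegree_eq _ (by omega) hq
    _ ≤ _ := Nat.pow_le_pow_right hq.le hd.2

end Counting

lemma card_irreducible_bounds (F : Type*) [Field F] [Finite F] {n : ℕ} (hn : n ≠ 0) :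
    n * Nat.card {f : F[X] // f.Monic ∧ Irreducible f ∧ f.natDegree = n} ≤ Nat.card F ^ n ∧
    Nat.card F ^ n ≤ n * Nat.card {f : F[X] // f.Monic ∧ Irreducible f ∧ f.natDegree = n} +
      n / 2 * Nat.card F ^ (n / 2) := by
  obtain ⟨p, hp⟩ := CharP.exists F
  have : Fact p.Prime := ⟨CharP.char_is_prime F p⟩
  have : NeZero n := ⟨hn⟩
  let L := FiniteField.Extension F p n
  let _ : Fintype L := Fintype.ofFinite L
  have hL : Nat.card L = Nat.card F ^ n := FiniteField.natCard_extension F p n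
  have h1 := card_degree_eq F L hn hL
  have h2 := card_degree_ne_le F L hn hL
  have h3 := Finset.card_filter_add_card_filter_not (s := (Finset.univ : Finset L))
    (fun x => (minpoly F x).natDegree = n)
  rw [Finset.card_univ, Fintype.card_eq_nat_card, hL] at h3
  omega

/-- `D_n^q ∼ q^n/n` as `n → ∞`: the number of monic irreducible polynomials of
degree `n` over a finite field with `q` elements. -/
theorem stmt_10 (F : Type*) [Field F] [Fintype F] (q : ℕ) (hq : Fintype.card F = q) :
    Tendsto
      (fun n : ℕ =>
        (n : ℝ) * (Nat.card {f : F[X] // f.Monic ∧ Irreducible f ∧ f.natDegree = n} : ℝ) /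
          (q : ℝ) ^ n)
      atTop (nhds 1) := by
  have hq1 : (1 : ℝ) < q := by
    rw [← hq]
    exact_mod_cast Fintype.one_lt_card (α := F)
  have hq0 : (0 : ℝ) < q := by linarith
  rw [Fintype.card_eq_nat_card] at hq
  have hhalf : Tendsto (fun n : ℕ => n / 2) atTop atTop := Nat.tendsto_div_const_atTop two_ne_zero
  have herr : Tendsto (fun n : ℕ => 1 - ((n / 2 : ℕ) : ℝ) ^ 1 / (q : ℝ) ^ (n / 2))
      atTop (nhds 1) := by
    simpa only [sub_zero, Function.comp_def] using
      ((tendsto_pow_const_div_const_pow_of_one_lt 1 hq1).comp hhalf).const_sub 1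
  refine tendsto_of_tendsto_of_tendsto_of_le_of_le' herr tendsto_const_nhds ?_ ?_
  · filter_upwards [eventually_ne_atTop 0] with n hn
    have h := (card_irreducible_bounds F hn).2
    rw [hq] at h
    have h' : (q : ℝ) ^ n ≤
        n * (Nat.card {f : F[X] // f.Monic ∧ Irreducible f ∧ f.natDegree = n} : ℝ) +
          ((n / 2 : ℕ) : ℝ) * (q : ℝ) ^ (n / 2) := by exact_mod_cast h
    rw [le_div_iff₀ (by positivity), sub_mul, one_mul, pow_one]
    -- `q ^ (n / 2) * q ^ (n / 2) ≤ q ^ n`, with strict inequality for odd `n`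
    have hpow : (q : ℝ) ^ (n / 2) * (q : ℝ) ^ (n / 2) ≤ (q : ℝ) ^ n := by
      rw [← pow_add]
      exact pow_le_pow_right₀ hq1.le (by omega)
    have : ((n / 2 : ℕ) : ℝ) * (q : ℝ) ^ (n / 2) ≤
        ((n / 2 : ℕ) : ℝ) / (q : ℝ) ^ (n / 2) * (q : ℝ) ^ n := by
      rw [div_mul_eq_mul_div, le_div_iff₀ (by positivity), mul_assoc]
      gcongr
    linarith
  · filter_upwards [eventually_ne_atTop 0] with n hn
    have h := (card_irreducible_bounds F hn).1
    rw [hq] at h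
    rw [div_le_one (by positivity)]
    exact_mod_cast h
end

section
/- Let F be a finite field, let L ≥ 1, let r : Fin (L+1) → F be an injective family of elements, and let α : Fin L → F be an injective family of elements such that α_i ≠ r_j for all i, j. Let v be a natural number coprime to |F| − 1. Then the map from {0,1}^L to the monoid F^{L+1} (with componentwise multiplication) sending a bit-vector m = (m_1,…,m_L) to the vector whose j-th component is ∏_{i=1}^L (r_j − α_i)^{v·m_i} is injective. (This is the injectivity of the encryption map in the Chinese-remainder version of the protocol.) -/
/-!
The exponent `v` is coprime to the order of `Fˣ`, so `x ↦ x ^ v` is injective on `Fˣ`. Since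
`r j ≠ α i`, the `j`-th ciphertext component is the `v`-th power of the nonzero value at `r j` of
the message polynomial `∏ i, (X - α i) ^ (m i)`, so the ciphertext determines the values of that
polynomial at the `L + 1` distinct points `r j`. Its degree is at most `L`, so it is determined by
those values, and `m` is recovered from its roots: `α k` is a root exactly when `m k = 1`.
-/

open Polynomial in
/-- The polynomial with simple roots exactly at those `α i` for which the bit `m i` is set. -/
noncomputable def messagePoly {F : Type*} [Field F] {L : ℕ} (α : Fin L → F) (m : Fin L → Fin 2) :
    F[X] :=
  ∏ i, (X - C (α i)) ^ (m i : ℕ)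

theorem messagePoly_eval {F : Type*} [Field F] {L : ℕ} (α : Fin L → F) (m : Fin L → Fin 2)
    (x : F) : (messagePoly α m).eval x = ∏ i, (x - α i) ^ (m i : ℕ) := by
  simp [messagePoly, Polynomial.eval_prod]

theorem messagePoly_degree_lt {F : Type*} [Field F] {L : ℕ} (α : Fin L → F) (m : Fin L → Fin 2) :
    (messagePoly α m).degree < (L + 1 : ℕ) := by
  have hdeg : (messagePoly α m).natDegree ≤ L := by
    unfold messagePoly
    refine (Polynomial.natDegree_prod_le _ _).trans ?_
    calc _ ≤ ∑ _i : Fin L, 1 := Finset.sum_le_sum fun i _ => by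
          rw [Polynomial.natDegree_pow, Polynomial.natDegree_X_sub_C]
          omega
      _ = L := by simp
  exact Polynomial.degree_le_natDegree.trans_lt (by exact_mod_cast Nat.lt_succ_of_le hdeg)

theorem messagePoly_eval_eq_zero_iff {F : Type*} [Field F] {L : ℕ} {α : Fin L → F}
    (hα : Function.Injective α) (m : Fin L → Fin 2) (k : Fin L) :
    (messagePoly α m).eval (α k) = 0 ↔ (m k : ℕ) ≠ 0 := by
  rw [messagePoly_eval, Finset.prod_eq_zero_iff]
  constructor
  · rintro ⟨i, -, hi⟩
    obtain ⟨h0, hne⟩ := pow_eq_zero_iff'.mp hi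
    rwa [hα (sub_eq_zero.mp h0)]
  · intro hk
    exact ⟨k, Finset.mem_univ k, by rw [sub_self, zero_pow hk]⟩

theorem eq_of_pow_eq_pow_of_coprime {F : Type*} [Field F] [Fintype F] {v : ℕ}
    (hv : Nat.Coprime v (Fintype.card F - 1)) {x y : F} (hx : x ≠ 0) (hy : y ≠ 0)
    (h : x ^ v = y ^ v) : x = y := by
  classical
  have hc : (Nat.card Fˣ).Coprime v := by
    rw [Nat.card_eq_fintype_card, Fintype.card_units]
    exact hv.symm
  have hu : Units.mk0 x hx = Units.mk0 y hy :=
    hc.pow_left_bijective.injective (Units.ext (by simpa using h))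
  simpa using congrArg Units.val hu

/-- Injectivity of the encryption map in the Chinese-remainder version of the
protocol: `m ↦ (j ↦ ∏ i, (r j - α i)^{v·mᵢ})` from `{0,1}^L` to `F^{L+1}`. -/
theorem stmt_13 (F : Type*) [Field F] [Fintype F]
    (L : ℕ) (hL : 1 ≤ L)
    (r : Fin (L + 1) → F) (hr : Function.Injective r)
    (α : Fin L → F) (hα : Function.Injective α)
    (hrα : ∀ (i : Fin L) (j : Fin (L + 1)), α i ≠ r j)
    (v : ℕ) (hv : Nat.Coprime v (Fintype.card F - 1)) :
    Function.Injective
      (fun m : Fin L → Fin 2 =>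
        fun j : Fin (L + 1) => ∏ i, (r j - α i) ^ (v * (m i : ℕ))) := by
  intro m m' h
  have hpow : ∀ (n : Fin L → Fin 2) (j : Fin (L + 1)),
      ∏ i, (r j - α i) ^ (v * (n i : ℕ)) = (messagePoly α n).eval (r j) ^ v := by
    intro n j
    rw [messagePoly_eval, ← Finset.prod_pow]
    exact Finset.prod_congr rfl fun i _ => by rw [mul_comm, pow_mul]
  have hne : ∀ (n : Fin L → Fin 2) (j : Fin (L + 1)), (messagePoly α n).eval (r j) ≠ 0 := by
    intro n j
    rw [messagePoly_eval]
    exact Finset.prod_ne_zero_iff.mpr fun i _ => pow_ne_zero _ (sub_ne_zero.mpr (hrα i j).symm)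
  have hpoly : messagePoly α m = messagePoly α m' := by
    refine Polynomial.eq_of_degrees_lt_of_eval_index_eq (v := r) Finset.univ hr.injOn
      (by simpa using messagePoly_degree_lt α m) (by simpa using messagePoly_degree_lt α m') ?_
    intro j _
    refine eq_of_pow_eq_pow_of_coprime hv (hne m j) (hne m' j) ?_
    rw [← hpow, ← hpow]
    exact congrFun h j
  funext k
  have hk := messagePoly_eval_eq_zero_iff hα m k
  rw [hpoly, messagePoly_eval_eq_zero_iff hα m' k] at hk
  ext
  omega
end
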